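/- arXiv:1802.00084 — 2 statements merged into one kernel-verified Lean document; each statement's English description precedes it below -/
import Mathlib

section
/- Let T be a three-element set. The number of orbits, under the natural action of the symmetric group of T on families of subsets of T, of nonempty families F of subsets of T in which all members have the same cardinality parity, is exactly 14. -/
/-!
On a three-element set the odd subsets are the singletons and the whole set, and the even subsets
are their complements. Permuting points, either class is a copy of `Option T`, with `none` fixed
and `some t` moved along with `t`. Up to permutation, a finite set `s` of elements of `Option T` is
determined by the number of points in it and by whether `none ∈ s`, so there are
`(3 + 1) * 2 - 1 = 7` orbits of nonempty families of each parity.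
-/

open Finset MulAction Equiv
open scoped Pointwise

section Orbits

theorem ncard_image_eq_ncard_image_of_eq_iff_eq {X Y Z : Type*} {S : Set X} {f : X → Y}
    {g : X → Z} (h : ∀ x ∈ S, ∀ y ∈ S, f x = f y ↔ g x = g y) :
    (f '' S).ncard = (g '' S).ncard := by
  have h_ker : Setoid.ker (fun x : S => f x) = Setoid.ker (fun x : S => g x) :=
    Setoid.ext fun x y => h x x.2 y y.2
  rw [Set.image_eq_range, Set.image_eq_range, ← Nat.card_coe_set_eq, ← Nat.card_coe_set_eq,
    ← Nat.card_congr (Setoid.quotientKerEquivRange _), h_ker,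
    Nat.card_congr (Setoid.quotientKerEquivRange _)]

variable {G β γ : Type*} [Group G] [MulAction G β] [MulAction G γ]

theorem ncard_orbit_image_eq_of_equivariant {f : β → γ} (hf : f.Injective)
    (hsmul : ∀ (g : G) (x : β), f (g • x) = g • f x) (S : Set β) :
    (orbit G '' (f '' S)).ncard = (orbit G '' S).ncard := by
  rw [Set.image_image]
  refine ncard_image_eq_ncard_image_of_eq_iff_eq fun x _ y _ => ?_
  simp only [orbit_eq_iff, mem_orbit_iff, ← hsmul, hf.eq_iff]

end Orbits

section Families

/-- The nonempty finite families all of whose members belong to `𝒳`. When a group acts on `β`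
and preserves `𝒳`, it acts on these families, and their orbits are what is counted. -/
def nonemptyFamilies {β : Type*} (𝒳 : Set β) : Set (Finset β) :=
  {F | F.Nonempty ∧ ∀ x ∈ F, x ∈ 𝒳}

variable {G β γ : Type*} [Group G] [MulAction G β] [MulAction G γ] [DecidableEq β]

theorem image_image_setOf_nonempty (f : γ → β) :
    Finset.image f '' {s | s.Nonempty} = nonemptyFamilies (Set.range f) := by
  ext F
  constructor
  · rintro ⟨s, hs, rfl⟩
    exact ⟨hs.image f, by simp⟩
  · rintro ⟨hF, h⟩
    obtain ⟨s, -, rfl⟩ := subset_set_image_iff.mp (Set.image_univ ▸ h : (F : Set β) ⊆ f '' Set.univ)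
    exact ⟨s, image_nonempty.mp hF, rfl⟩

theorem ncard_orbit_image_nonemptyFamilies_range [DecidableEq γ] {f : γ → β} (hf : f.Injective)
    (hsmul : ∀ (g : G) (x : γ), f (g • x) = g • f x) :
    (orbit G '' nonemptyFamilies (Set.range f)).ncard =
      (orbit G '' {s : Finset γ | s.Nonempty}).ncard := by
  rw [← image_image_setOf_nonempty]
  exact ncard_orbit_image_eq_of_equivariant (image_injective hf)
    (fun g s => image_smul_comm f g s (hsmul g)) _

theorem disjoint_orbit_image_nonemptyFamilies {𝒳 𝒴 : Set β} (h : Disjoint 𝒳 𝒴)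
    (h𝒳 : ∀ (g : G), ∀ x ∈ 𝒳, g • x ∈ 𝒳) :
    Disjoint (orbit G '' nonemptyFamilies 𝒳) (orbit G '' nonemptyFamilies 𝒴) := by
  rw [Set.disjoint_left]
  rintro _ ⟨F, ⟨⟨x, hx⟩, hF⟩, rfl⟩ ⟨F', ⟨-, hF'⟩, horbit⟩
  obtain ⟨g, rfl⟩ := mem_orbit_iff.mp (orbit_eq_iff.mp horbit)
  exact Set.disjoint_left.mp h (h𝒳 g x (hF x hx)) (hF' _ (smul_mem_smul_finset hx))

end Families

section OptionFamilies

variable {α : Type*}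

theorem eq_of_eraseNone_eq {s t : Finset (Option α)} (h : eraseNone s = eraseNone t)
    (hnone : none ∈ s ↔ none ∈ t) : s = t := by
  ext (_ | a)
  · exact hnone
  · rw [← mem_eraseNone, h, mem_eraseNone]

variable [DecidableEq α]

theorem exists_perm_smul_finset_eq {s t : Finset α} (h : #s = #t) : ∃ σ : Perm α, σ • s = t := by
  obtain ⟨σ, hσ⟩ := (Set.powersetCard.isPretransitive (α := α) (n := #t)).exists_smul_eq
    ⟨s, h⟩ ⟨t, rfl⟩
  exact ⟨σ, congrArg Subtype.val hσ⟩

theorem eraseNone_smul {G : Type*} [Group G] [MulAction G α] (g : G)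
    (s : Finset (Option α)) : eraseNone (g • s) = g • eraseNone s := by
  ext a
  simp only [mem_eraseNone, ← inv_smul_mem_iff, Option.smul_some]

theorem none_mem_smul_iff {G : Type*} [Group G] [MulAction G α] (g : G)
    (s : Finset (Option α)) : none ∈ g • s ↔ none ∈ s := by
  rw [← inv_smul_mem_iff, Option.smul_none]

/-- The number of elements of `s` other than `none`, and whether `none` belongs to `s`: a complete
invariant of the finite sets `s` of elements of `Option α` up to permutations of `α`. -/
def optionProfile (s : Finset (Option α)) : ℕ × Bool :=
  (#(eraseNone s), decide (none ∈ s))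

theorem orbit_perm_eq_iff_optionProfile_eq {s t : Finset (Option α)} :
    orbit (Perm α) s = orbit (Perm α) t ↔ optionProfile s = optionProfile t := by
  rw [orbit_eq_iff, mem_orbit_iff]
  simp only [optionProfile, Prod.mk.injEq, decide_eq_decide]
  constructor
  · rintro ⟨σ, rfl⟩
    rw [eraseNone_smul, card_smul_finset, none_mem_smul_iff]
    exact ⟨rfl, Iff.rfl⟩
  · rintro ⟨hcard, hnone⟩
    obtain ⟨σ, hσ⟩ := exists_perm_smul_finset_eq hcard.symm
    exact ⟨σ, eq_of_eraseNone_eq (by rw [eraseNone_smul, hσ])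
      (by rw [none_mem_smul_iff, hnone])⟩

variable [Fintype α]

theorem optionProfile_image_setOf_nonempty :
    (optionProfile (α := α)) '' {s | s.Nonempty} =
      ((range (Fintype.card α + 1) ×ˢ univ).erase (0, false) : Finset (ℕ × Bool)) := by
  ext ⟨k, b⟩
  simp only [optionProfile, Set.mem_image, Set.mem_ofPred_eq, Prod.mk.injEq, coe_erase,
    Set.mem_sdiff, mem_coe, mem_product, mem_range, mem_univ, and_true,
    Set.mem_singleton_iff, Nat.lt_succ_iff]
  constructor
  · rintro ⟨s, ⟨x, hx⟩, rfl, rfl⟩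
    refine ⟨card_le_univ _, fun ⟨hcard, hnone⟩ => ?_⟩
    cases x with
    | none => exact of_decide_eq_false hnone hx
    | some a => exact notMem_empty a (card_eq_zero.mp hcard ▸ mem_eraseNone.mpr hx)
  · rintro ⟨hk, hkb⟩
    obtain ⟨A, -, rfl⟩ := exists_subset_card_eq (s := (univ : Finset α)) (n := k) hk
    cases b with
    | true => exact ⟨insertNone A, insertNone_nonempty, by simp, by simp⟩
    | false =>
      have hA : A.Nonempty := card_ne_zero.mp fun h => hkb ⟨h, rfl⟩
      exact ⟨A.map .some, hA.map, by simp, by simp⟩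

theorem ncard_orbit_image_setOf_nonempty_option :
    (orbit (Perm α) '' {s : Finset (Option α) | s.Nonempty}).ncard = 2 * Fintype.card α + 1 := by
  rw [ncard_image_eq_ncard_image_of_eq_iff_eq fun _ _ _ _ => orbit_perm_eq_iff_optionProfile_eq,
    optionProfile_image_setOf_nonempty, Set.ncard_coe_finset, card_erase_of_mem (by simp),
    card_product, card_range, card_univ, Fintype.card_bool]
  lia

end OptionFamilies

section Parity

variable {α : Type*}

theorem setOf_nonempty_and_card_mod_two_eq :
    {F : Finset (Finset α) | F.Nonempty ∧ ∀ X ∈ F, ∀ Y ∈ F, #X % 2 = #Y % 2} =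
      nonemptyFamilies {X | Odd #X} ∪ nonemptyFamilies {X | Even #X} := by
  ext F
  constructor
  · rintro ⟨⟨X, hX⟩, h⟩
    obtain hX_even | hX_odd := Nat.even_or_odd #X
    · exact Or.inr ⟨⟨X, hX⟩, fun Y hY =>
        Nat.even_iff.mpr ((h Y hY X hX).trans (Nat.even_iff.mp hX_even))⟩
    · exact Or.inl ⟨⟨X, hX⟩, fun Y hY =>
        Nat.odd_iff.mpr ((h Y hY X hX).trans (Nat.odd_iff.mp hX_odd))⟩
  · rintro (⟨hF, h⟩ | ⟨hF, h⟩)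
    · exact ⟨hF, fun X hX Y hY => (Nat.odd_iff.mp (h X hX)).trans (Nat.odd_iff.mp (h Y hY)).symm⟩
    · exact ⟨hF, fun X hX Y hY => (Nat.even_iff.mp (h X hX)).trans (Nat.even_iff.mp (h Y hY)).symm⟩

theorem disjoint_orbit_image_odd_even_families {G : Type*} [Group G] [MulAction G α]
    [DecidableEq α] : Disjoint (orbit G '' nonemptyFamilies {X : Finset α | Odd #X})
      (orbit G '' nonemptyFamilies {X : Finset α | Even #X}) :=
  disjoint_orbit_image_nonemptyFamilies
    (Set.disjoint_left.mpr fun _ h_odd h_even => Nat.not_even_iff_odd.mpr h_odd h_even)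
    fun g X hX => by rwa [Set.mem_ofPred_eq, card_smul_finset]

variable [Fintype α]

/-- The singletons and the whole set, indexed by `Option α` compatibly with permutations of `α`.
When `α` has three elements these are its odd subsets, and their complements its even subsets. -/
def singletonOrUniv : Option α → Finset α :=
  fun x => x.elim univ singleton

theorem singletonOrUniv_injective (h : Fintype.card α ≠ 1) :
    Function.Injective (singletonOrUniv (α := α)) := by
  have h_ne (a : α) : {a} ≠ (univ : Finset α) := fun ha =>
    h (by rw [← card_univ, ← ha, card_singleton])
  rintro (_ | a) (_ | b) hab
  · rfl
  · exact (h_ne b hab.symm).elim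
  · exact (h_ne a hab).elim
  · exact congrArg some (singleton_injective hab)

theorem range_singletonOrUniv_of_card_eq_three (h : Fintype.card α = 3) :
    Set.range (singletonOrUniv (α := α)) = {X | Odd #X} := by
  ext X
  constructor
  · rintro ⟨_ | a, rfl⟩
    · simpa [singletonOrUniv, h] using (by decide : Odd 3)
    · simp [singletonOrUniv]
  · intro hX
    have hle : #X ≤ 3 := h ▸ card_le_univ X
    obtain hX1 | hX3 : #X = 1 ∨ #X = 3 := by
      rw [Set.mem_ofPred_eq, Nat.odd_iff] at hX
      lia
    · obtain ⟨a, rfl⟩ := card_eq_one.mp hX1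
      exact ⟨some a, rfl⟩
    · exact ⟨none, ((card_eq_iff_eq_univ X).mp (hX3.trans h.symm)).symm⟩

variable [DecidableEq α]

theorem singletonOrUniv_smul {G : Type*} [Group G] [MulAction G α] (g : G)
    (x : Option α) : singletonOrUniv (g • x) = g • singletonOrUniv x := by
  cases x <;> simp [singletonOrUniv]

theorem compl_smul_finset {G : Type*} [Group G] [MulAction G α] (g : G)
    (X : Finset α) : (g • X)ᶜ = g • Xᶜ := by
  ext a
  simp only [mem_compl, ← inv_smul_mem_iff]

theorem range_compl_singletonOrUniv_of_card_eq_three (h : Fintype.card α = 3) :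
    Set.range (compl ∘ singletonOrUniv (α := α)) = {X | Even #X} := by
  rw [Set.range_comp, range_singletonOrUniv_of_card_eq_three h]
  ext X
  rw [Set.mem_compl_image, Set.mem_ofPred_eq, card_compl, Nat.odd_sub (card_le_univ X), h]
  exact iff_true_left (by decide)

theorem ncard_orbit_image_odd_families (h : Fintype.card α = 3) :
    (orbit (Perm α) '' nonemptyFamilies {X : Finset α | Odd #X}).ncard = 7 := by
  rw [← range_singletonOrUniv_of_card_eq_three h,
    ncard_orbit_image_nonemptyFamilies_range (singletonOrUniv_injective (by lia))
      singletonOrUniv_smul, ncard_orbit_image_setOf_nonempty_option, h]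

theorem ncard_orbit_image_even_families (h : Fintype.card α = 3) :
    (orbit (Perm α) '' nonemptyFamilies {X : Finset α | Even #X}).ncard = 7 := by
  rw [← range_compl_singletonOrUniv_of_card_eq_three h,
    ncard_orbit_image_nonemptyFamilies_range
      (compl_injective.comp (singletonOrUniv_injective (by lia)))
      (fun σ x => by simp only [Function.comp_apply, singletonOrUniv_smul, compl_smul_finset]),
    ncard_orbit_image_setOf_nonempty_option, h]

theorem ncard_orbit_image_same_parity_families (h : Fintype.card α = 3) :
    (orbit (Perm α) '' {F : Finset (Finset α) |
      F.Nonempty ∧ ∀ X ∈ F, ∀ Y ∈ F, #X % 2 = #Y % 2}).ncard = 14 := by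
  rw [setOf_nonempty_and_card_mod_two_eq, Set.image_union,
    Set.ncard_union_eq disjoint_orbit_image_odd_even_families (Set.toFinite _) (Set.toFinite _),
    ncard_orbit_image_odd_families h, ncard_orbit_image_even_families h]

end Parity

/-- On a three-element set `T`, the number of orbits — under the natural action of the
symmetric group of `T` on families of subsets of `T` — of nonempty families all of whose
members have the same cardinality parity, is exactly 14. -/
theorem orbits_of_parity_families_card {T : Type} [Fintype T] [DecidableEq T]
    (hT : Fintype.card T = 3) :
    Set.ncard {O : Set (Finset (Finset T)) |
      ∃ F : Finset (Finset T),
        (F.Nonempty ∧ ∀ X ∈ F, ∀ Y ∈ F, X.card % 2 = Y.card % 2) ∧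
        O = {F' | ∃ σ : Equiv.Perm T, F.image (fun X => X.image σ) = F'}} = 14 := by
  have h_orbits : {O : Set (Finset (Finset T)) |
      ∃ F : Finset (Finset T),
        (F.Nonempty ∧ ∀ X ∈ F, ∀ Y ∈ F, X.card % 2 = Y.card % 2) ∧
        O = {F' | ∃ σ : Equiv.Perm T, F.image (fun X => X.image σ) = F'}} =
      orbit (Perm T) '' {F | F.Nonempty ∧ ∀ X ∈ F, ∀ Y ∈ F, #X % 2 = #Y % 2} := by
    ext O
    exact exists_congr fun F => and_congr_right fun _ => eq_comm
  rw [h_orbits, ncard_orbit_image_same_parity_families hT]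
end

section
/- There is a natural number N with the following property: for every finite simple graph G with integer edge weights w, and every terminal set T ⊆ V(G) with |T| ≤ 3, there exist a finite simple graph G' containing T with at most N vertices, integer edge weights w' on G', and a constant c ∈ ℤ, such that for every X ⊆ T, the minimum total weight of a matching of G covering exactly (V(G) ∖ T) ∪ X equals c plus the minimum total weight of a matching of G' covering exactly (V(G') ∖ T) ∪ X, where both minima are taken in ℤ ∪ {+∞} (with value +∞ when no such matching exists, and c + ∞ = ∞). -/
/-- A finite simple graph: a finite vertex set together with a symmetric,
irreflexive adjacency relation whose endpoints lie in the vertex set. -/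
structure FinGraph (V : Type) where
  verts : Set V
  finite : verts.Finite
  Adj : V → V → Prop
  symm : ∀ u v, Adj u v → Adj v u
  irrefl : ∀ v, ¬ Adj v v
  mem_of_adj : ∀ u v, Adj u v → u ∈ verts ∧ v ∈ verts

/-- The set of vertices covered by a set of (unordered) edges. -/
def coversVerts {V : Type} (M : Set (Sym2 V)) : Set V := {v | ∃ e ∈ M, v ∈ e}

/-- `M` is a matching of `G`: a set of edges of `G`, no two of which share an endpoint. -/
def FinGraph.IsMatching {V : Type} (G : FinGraph V) (M : Set (Sym2 V)) : Prop :=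
  (∀ e ∈ M, ∃ u v, G.Adj u v ∧ e = s(u, v)) ∧
  ∀ e ∈ M, ∀ f ∈ M, e ≠ f → ∀ v, v ∈ e → v ∉ f

/-- The matching pattern of `G` on a terminal set `T`: the family of subsets `X ⊆ T`
such that some matching of `G` covers exactly `(V(G) \ T) ∪ X`. -/
def FinGraph.matchingPattern {V : Type} (G : FinGraph V) (T : Set V) : Set (Set V) :=
  {X | X ⊆ T ∧ ∃ M, G.IsMatching M ∧ coversVerts M = (G.verts \ T) ∪ X}

/-- The minimum total weight, in `ℤ ∪ {+∞}`, of a matching of `G` covering exactly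
`(V(G) \ T) ∪ X`; the value is `+∞` when no such matching exists. -/
noncomputable def minMatchingWeight {V : Type} (G : FinGraph V) (w : Sym2 V → ℤ)
    (T X : Set V) : WithTop ℤ :=
  sInf {z : WithTop ℤ | ∃ M : Set (Sym2 V),
    G.IsMatching M ∧ coversVerts M = (G.verts \ T) ∪ X ∧
    z = ((∑ᶠ e ∈ M, w e : ℤ) : WithTop ℤ)}

/-! A matching covers an even number of vertices, so the terminal sets `X` of finite cost all have
the same parity. If `f` is finite at `∅`, an edge `st` of weight `f {s, t} - f ∅` for every pair of
terminals represents `f` on every `X` with at most three elements: such an `X` is empty, a pair, or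
of odd size and hence of infinite cost. An arbitrary feasible set `B` is moved to `∅` by toggling
its terminals one by one: to replace `X` by `X ∆ {t}`, rename `t` to a new vertex `p` and attach the
terminal `t` to `p` by an edge of weight zero. Then `p` must be matched to `t` if `t ∈ X`, and
inside the old network if `t ∉ X`. If there is no room in the vertex type for the new vertices,
the network itself is already small enough. -/

open scoped symmDiff

theorem even_ncard_symmDiff_iff {α : Type*} {X Y : Set α} (hX : X.Finite) (hY : Y.Finite) :
    Even (X ∆ Y).ncard ↔ (Even X.ncard ↔ Even Y.ncard) := by
  have hXY := Set.ncard_union_eq disjoint_sdiff_sdiff hX.sdiff hY.sdiff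
  have hX' := Set.ncard_inter_add_ncard_sdiff_eq_ncard X Y hX
  have hY' := Set.ncard_inter_add_ncard_sdiff_eq_ncard Y X hY
  rw [Set.inter_comm] at hY'
  rw [Set.symmDiff_def, hXY]
  grind

theorem sInf_image_add_left_of_finite {α : Type*} [ConditionallyCompleteLinearOrder α] [Add α]
    [AddLeftMono α] {S : Set (WithTop α)} (hS : S.Finite) (a : WithTop α) :
    sInf ((a + ·) '' S) = a + sInf S := by
  rcases S.eq_empty_or_nonempty with rfl | hne
  · rw [Set.image_empty, WithTop.sInf_empty, WithTop.add_top]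
  · have hmono : Monotone fun z : WithTop α => a + z := fun _ _ h => add_le_add_right h a
    have hleast : IsLeast S (sInf S) := ⟨hne.csInf_mem hS, fun _ hz => csInf_le hS.bddBelow hz⟩
    exact (hmono.map_isLeast hleast).csInf_eq

section CoversVerts

variable {V W : Type} {M : Set (Sym2 V)}

theorem mem_coversVerts {v : V} : v ∈ coversVerts M ↔ ∃ e ∈ M, v ∈ e :=
  Iff.rfl

theorem coversVerts_eq_empty_iff : coversVerts M = ∅ ↔ M = ∅ := by
  refine ⟨fun h => Set.eq_empty_of_forall_notMem fun e he => ?_, ?_⟩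
  · exact Set.notMem_empty _ (h ▸ mem_coversVerts.2 ⟨e, he, e.out_fst_mem⟩)
  · rintro rfl
    simp [coversVerts]

theorem coversVerts_insert (u v : V) (M : Set (Sym2 V)) :
    coversVerts (insert s(u, v) M) = insert u (insert v (coversVerts M)) := by
  ext x
  simp only [mem_coversVerts, Set.mem_insert_iff, exists_eq_or_imp, Sym2.mem_iff, or_assoc]

theorem coversVerts_image_map (f : V → W) (M : Set (Sym2 V)) :
    coversVerts (Sym2.map f '' M) = f '' coversVerts M := by
  ext x
  constructor
  · rintro ⟨_, ⟨e, he, rfl⟩, hx⟩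
    obtain ⟨v, hve, rfl⟩ := Sym2.mem_map.1 hx
    exact ⟨v, ⟨e, he, hve⟩, rfl⟩
  · rintro ⟨v, ⟨e, he, hve⟩, rfl⟩
    exact ⟨e.map f, ⟨e, he, rfl⟩, Sym2.mem_map.2 ⟨v, hve, rfl⟩⟩

end CoversVerts

namespace FinGraph

variable {V W : Type} {G : FinGraph V} {w : Sym2 V → ℤ} {C T X : Set V} {M : Set (Sym2 V)}

theorem finite_sym2_verts (G : FinGraph V) : G.verts.sym2.Finite :=
  ((G.finite.prod G.finite).image fun p => s(p.1, p.2)).subset <|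
    Sym2.ind fun u v huv => ⟨(u, v), huv, rfl⟩

namespace IsMatching

theorem adj (hM : G.IsMatching M) {u v : V} (h : s(u, v) ∈ M) : G.Adj u v := by
  obtain ⟨x, y, hxy, he⟩ := hM.1 _ h
  rcases Sym2.eq_iff.1 he with ⟨rfl, rfl⟩ | ⟨rfl, rfl⟩
  exacts [hxy, G.symm _ _ hxy]

theorem eq_of_mem (hM : G.IsMatching M) {e f : Sym2 V} (he : e ∈ M) (hf : f ∈ M) {v : V}
    (hve : v ∈ e) (hvf : v ∈ f) : e = f :=
  by_contra fun hne => hM.2 e he f hf hne v hve hvf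

theorem subset (hM : G.IsMatching M) {N : Set (Sym2 V)} (h : N ⊆ M) : G.IsMatching N :=
  ⟨fun e he => hM.1 e (h he), fun e he f hf => hM.2 e (h he) f (h hf)⟩

theorem subset_sym2_verts (hM : G.IsMatching M) : M ⊆ G.verts.sym2 := by
  intro e he
  obtain ⟨u, v, huv, rfl⟩ := hM.1 e he
  exact G.mem_of_adj u v huv

theorem finite (hM : G.IsMatching M) : M.Finite :=
  G.finite_sym2_verts.subset hM.subset_sym2_verts

theorem insert (hM : G.IsMatching M) {u v : V} (huv : G.Adj u v) (hu : u ∉ coversVerts M)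
    (hv : v ∉ coversVerts M) : G.IsMatching (insert s(u, v) M) := by
  have hdisj : ∀ e ∈ M, ∀ x ∈ e, x ∉ s(u, v) := by
    intro e he x hxe hx
    rcases Sym2.mem_iff.1 hx with rfl | rfl
    exacts [hu ⟨e, he, hxe⟩, hv ⟨e, he, hxe⟩]
  constructor
  · rintro e (rfl | he)
    exacts [⟨u, v, huv, rfl⟩, hM.1 e he]
  · rintro e (rfl | he) f (rfl | hf) hne x hxe hxf
    exacts [hne rfl, hdisj f hf x hxf hxe, hdisj e he x hxe hxf, hM.2 e he f hf hne x hxe hxf]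

theorem coversVerts_sdiff_singleton (hM : G.IsMatching M) {e : Sym2 V} (he : e ∈ M) :
    coversVerts (M \ {e}) = coversVerts M \ {v | v ∈ e} := by
  ext v
  constructor
  · rintro ⟨f, ⟨hf, hne⟩, hvf⟩
    exact ⟨⟨f, hf, hvf⟩, fun hve => hne (hM.eq_of_mem hf he hvf hve)⟩
  · rintro ⟨⟨f, hf, hvf⟩, hve⟩
    exact ⟨f, ⟨hf, fun h => hve (h ▸ hvf)⟩, hvf⟩

theorem coversVerts_eq_pair_iff (hM : G.IsMatching M) {s t : V} :
    coversVerts M = {s, t} ↔ M = {s(s, t)} := by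
  constructor
  · intro hcov
    have hedge : ∀ e ∈ M, e = s(s, t) := by
      intro e he
      obtain ⟨u, v, huv, rfl⟩ := hM.1 e he
      have hu : u ∈ coversVerts M := ⟨_, he, Sym2.mem_mk_left u v⟩
      have hv : v ∈ coversVerts M := ⟨_, he, Sym2.mem_mk_right u v⟩
      have hne : u ≠ v := fun h => G.irrefl v (h ▸ huv)
      grind
    obtain ⟨e, he, -⟩ : s ∈ coversVerts M := hcov ▸ Set.mem_insert s {t}
    exact Set.eq_singleton_iff_unique_mem.2 ⟨hedge e he ▸ he, hedge⟩
  · rintro rfl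
    ext x
    simp [mem_coversVerts]

theorem even_ncard_coversVerts (hM : G.IsMatching M) : Even (coversVerts M).ncard := by
  classical
  have hcov : coversVerts M = (hM.finite.toFinset.biUnion Sym2.toFinset : Finset V) := by
    ext v
    simp [mem_coversVerts]
  rw [hcov, Set.ncard_coe_finset, Finset.card_biUnion]
  · refine Finset.even_sum _ fun e he => ?_
    obtain ⟨u, v, huv, rfl⟩ := hM.1 e (hM.finite.mem_toFinset.1 he)
    have hne : u ≠ v := fun h => G.irrefl v (h ▸ huv)
    rw [Sym2.card_toFinset_of_not_isDiag _ (Sym2.mk_isDiag_iff.not.2 hne)]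
    exact even_two
  · intro e he f hf hne
    simp only [Finset.disjoint_left, Sym2.mem_toFinset]
    exact hM.2 e (hM.finite.mem_toFinset.1 he) f (hM.finite.mem_toFinset.1 hf) hne

end IsMatching

theorem finite_setOf_isMatching (G : FinGraph V) : {M | G.IsMatching M}.Finite :=
  G.finite_sym2_verts.finite_subsets.subset fun _ hM => hM.subset_sym2_verts

theorem isMatching_empty : G.IsMatching ∅ :=
  ⟨fun _ h => h.elim, fun _ h => h.elim⟩

theorem isMatching_singleton_iff {u v : V} : G.IsMatching {s(u, v)} ↔ G.Adj u v := by
  refine ⟨fun hM => hM.adj rfl, fun huv => ?_⟩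
  have hcov : coversVerts (∅ : Set (Sym2 V)) = ∅ := coversVerts_eq_empty_iff.2 rfl
  rw [← insert_empty_eq]
  exact isMatching_empty.insert huv (by simp [hcov]) (by simp [hcov])

/-- The minimum weight of a matching of `G` covering exactly the vertex set `C`, with value `⊤`
when there is none. Unlike `minMatchingWeight` it does not refer to terminals, so that the effect
of an operation on networks can be stated for each covered set separately. -/
noncomputable def minCoverWeight (G : FinGraph V) (w : Sym2 V → ℤ) (C : Set V) : WithTop ℤ :=
  sInf {z : WithTop ℤ | ∃ M : Set (Sym2 V),
    G.IsMatching M ∧ coversVerts M = C ∧ z = ((∑ᶠ e ∈ M, w e : ℤ) : WithTop ℤ)}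

theorem minMatchingWeight_eq_minCoverWeight (G : FinGraph V) (w : Sym2 V → ℤ) (T X : Set V) :
    minMatchingWeight G w T X = G.minCoverWeight w (G.verts \ T ∪ X) :=
  rfl

theorem minMatchingWeight_verts (G : FinGraph V) (w : Sym2 V → ℤ) (X : Set V) :
    minMatchingWeight G w G.verts X = G.minCoverWeight w X := by
  rw [minMatchingWeight_eq_minCoverWeight, sdiff_self, Set.bot_eq_empty, Set.empty_union]

theorem minCoverWeight_eq_top (h : ∀ M, G.IsMatching M → coversVerts M ≠ C) :
    G.minCoverWeight w C = ⊤ := by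
  rw [minCoverWeight, ← WithTop.sInf_empty]
  congr 1
  exact Set.eq_empty_of_forall_notMem fun z ⟨M, hM, hcov, _⟩ => h M hM hcov

theorem minCoverWeight_eq_top_of_odd (hC : Odd C.ncard) : G.minCoverWeight w C = ⊤ :=
  minCoverWeight_eq_top fun _ hM hcov =>
    Nat.not_even_iff_odd.2 hC (hcov ▸ hM.even_ncard_coversVerts)

theorem minCoverWeight_eq_of_unique (hM : G.IsMatching M)
    (huniq : ∀ N, G.IsMatching N → (coversVerts N = C ↔ N = M)) :
    G.minCoverWeight w C = (∑ᶠ e ∈ M, w e : ℤ) := by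
  rw [minCoverWeight, ← csInf_singleton ((∑ᶠ e ∈ M, w e : ℤ) : WithTop ℤ)]
  congr 1
  ext z
  constructor
  · rintro ⟨N, hN, hcov, rfl⟩
    rw [(huniq N hN).1 hcov, Set.mem_singleton_iff]
  · rintro rfl
    exact ⟨M, hM, (huniq M hM).2 rfl, rfl⟩

theorem minCoverWeight_empty : G.minCoverWeight w ∅ = 0 := by
  rw [minCoverWeight_eq_of_unique isMatching_empty fun _ _ => coversVerts_eq_empty_iff,
    finsum_mem_empty, WithTop.coe_zero]

theorem minCoverWeight_pair_of_adj {s t : V} (h : G.Adj s t) :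
    G.minCoverWeight w {s, t} = w s(s, t) := by
  rw [minCoverWeight_eq_of_unique (isMatching_singleton_iff.2 h)
    fun _ hN => hN.coversVerts_eq_pair_iff, finsum_mem_singleton]

theorem minCoverWeight_pair_of_not_adj {s t : V} (h : ¬ G.Adj s t) :
    G.minCoverWeight w {s, t} = ⊤ :=
  minCoverWeight_eq_top fun _ hM hcov =>
    h (isMatching_singleton_iff.1 (hM.coversVerts_eq_pair_iff.1 hcov ▸ hM))

theorem even_ncard_symmDiff_of_minMatchingWeight_ne_top {Y : Set V} (hT : T ⊆ G.verts)
    (hX : X ⊆ T) (hY : Y ⊆ T) (hfX : minMatchingWeight G w T X ≠ ⊤)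
    (hfY : minMatchingWeight G w T Y ≠ ⊤) : Even (X ∆ Y).ncard := by
  have even_of_ne_top : ∀ Z ⊆ T, minMatchingWeight G w T Z ≠ ⊤ →
      Even ((G.verts \ T).ncard + Z.ncard) := by
    intro Z hZ hfZ
    rw [← Set.ncard_union_eq (Set.disjoint_sdiff_left.mono_right hZ)
      (G.finite.subset Set.sdiff_subset) (G.finite.subset (hZ.trans hT))]
    exact Nat.not_odd_iff_even.1 fun hodd => hfZ (minCoverWeight_eq_top_of_odd hodd)
  rw [even_ncard_symmDiff_iff (G.finite.subset (hX.trans hT)) (G.finite.subset (hY.trans hT))]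
  have hX' := even_of_ne_top X hX hfX
  have hY' := even_of_ne_top Y hY hfY
  grind

section Map

variable (σ : V ≃ W)

/-- The graph obtained from `G` by renaming every vertex `v` to `σ v`. -/
def map (G : FinGraph V) (σ : V ≃ W) : FinGraph W where
  verts := σ '' G.verts
  finite := G.finite.image σ
  Adj u v := G.Adj (σ.symm u) (σ.symm v)
  symm _ _ h := G.symm _ _ h
  irrefl _ := G.irrefl _
  mem_of_adj u v h := by
    rw [σ.image_eq_preimage_symm]
    exact G.mem_of_adj _ _ h

theorem isMatching_map_iff : (G.map σ).IsMatching (Sym2.map σ '' M) ↔ G.IsMatching M := by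
  have hσ : Function.Injective (Sym2.map σ) := Sym2.map.injective σ.injective
  simp only [IsMatching, Set.forall_mem_image, σ.surjective.exists, σ.surjective.forall, map,
    Equiv.symm_apply_apply, ← Sym2.map_mk, hσ.eq_iff, hσ.ne_iff, Sym2.mem_map,
    σ.injective.eq_iff, exists_eq_right]

theorem minCoverWeight_map {w' : Sym2 W → ℤ}
    (hw : ∀ u v, G.Adj u v → w' s(σ u, σ v) = w s(u, v)) :
    (G.map σ).minCoverWeight w' (σ '' C) = G.minCoverWeight w C := by
  have hσ : Function.Injective (Sym2.map σ) := Sym2.map.injective σ.injective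
  have hsurj : Function.Surjective fun M : Set (Sym2 V) => Sym2.map σ '' M :=
    Set.image_surjective.2 fun e => ⟨e.map σ.symm, by simp [Sym2.map_map]⟩
  have hsum {M : Set (Sym2 V)} (hM : G.IsMatching M) :
      ∑ᶠ e ∈ Sym2.map σ '' M, w' e = ∑ᶠ e ∈ M, w e := by
    rw [finsum_mem_image hσ.injOn]
    refine finsum_mem_congr rfl fun e he => ?_
    obtain ⟨u, v, huv, rfl⟩ := hM.1 e he
    exact hw u v huv
  simp only [minCoverWeight, hsurj.exists, isMatching_map_iff, coversVerts_image_map,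
    σ.injective.image_injective.eq_iff]
  congr 1
  ext z
  exact exists_congr fun M => and_congr_right fun hM => by rw [hsum hM]

end Map

section AddLeaf

variable {p t : V} (hp : p ∈ G.verts) (ht : t ∉ G.verts)

/-- The graph obtained from `G` by adding a new vertex `t` whose only neighbour is `p`. -/
def addLeaf (G : FinGraph V) {p t : V} (hp : p ∈ G.verts) (ht : t ∉ G.verts) : FinGraph V where
  verts := insert t G.verts
  finite := G.finite.insert t
  Adj u v := G.Adj u v ∨ s(u, v) = s(p, t)
  symm u v h := h.imp (G.symm u v) fun h => Sym2.eq_swap.trans h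
  irrefl v h := by
    rcases h with h | h
    · exact G.irrefl v h
    · grind
  mem_of_adj u v h := by
    rcases h with h | h
    · exact (G.mem_of_adj u v h).imp (Set.mem_insert_of_mem t) (Set.mem_insert_of_mem t)
    · grind

theorem IsMatching.addLeaf (hM : G.IsMatching M) : (G.addLeaf hp ht).IsMatching M :=
  ⟨fun e he => (hM.1 e he).imp fun _ h => h.imp fun _ h => h.imp_left Or.inl, hM.2⟩

theorem IsMatching.of_addLeaf (hM : (G.addLeaf hp ht).IsMatching M) (htM : t ∉ coversVerts M) :
    G.IsMatching M := by
  refine ⟨fun e he => ?_, hM.2⟩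
  obtain ⟨u, v, huv | huv, rfl⟩ := hM.1 e he
  · exact ⟨u, v, huv, rfl⟩
  · exact absurd ⟨_, he, huv ▸ Sym2.mem_mk_right p t⟩ htM

theorem IsMatching.mk_mem_of_addLeaf (hM : (G.addLeaf hp ht).IsMatching M)
    (htM : t ∈ coversVerts M) : s(p, t) ∈ M := by
  obtain ⟨e, he, hte⟩ := htM
  obtain ⟨u, v, huv | huv, rfl⟩ := hM.1 e he
  · have huvG := G.mem_of_adj u v huv
    grind
  · exact huv ▸ he

theorem minCoverWeight_addLeaf_of_notMem (htC : t ∉ C) :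
    (G.addLeaf hp ht).minCoverWeight w C = G.minCoverWeight w C := by
  rw [minCoverWeight, minCoverWeight]
  congr 1
  ext z
  constructor
  · rintro ⟨M, hM, rfl, hz⟩
    exact ⟨M, hM.of_addLeaf hp ht htC, rfl, hz⟩
  · rintro ⟨M, hM, hcov, hz⟩
    exact ⟨M, hM.addLeaf hp ht, hcov, hz⟩

theorem minCoverWeight_addLeaf_insert (hpC : p ∉ C) (htC : t ∉ C) :
    (G.addLeaf hp ht).minCoverWeight w (insert p (insert t C)) =
      w s(p, t) + G.minCoverWeight w C := by
  have hweight : ∀ {M}, G.IsMatching M → coversVerts M = C →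
      ∑ᶠ e ∈ insert s(p, t) M, w e = w s(p, t) + ∑ᶠ e ∈ M, w e := by
    rintro M hM rfl
    exact finsum_mem_insert w (fun h => hpC ⟨_, h, Sym2.mem_mk_left p t⟩) hM.finite
  rw [minCoverWeight, minCoverWeight, ← sInf_image_add_left_of_finite]
  · congr 1
    ext z
    constructor
    · rintro ⟨M, hM, hcov, rfl⟩
      have hmem : s(p, t) ∈ M := hM.mk_mem_of_addLeaf hp ht (by simp [hcov])
      have hcov' : coversVerts (M \ {s(p, t)}) = C := by
        rw [hM.coversVerts_sdiff_singleton hmem, hcov]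
        ext x
        simp only [Set.mem_sdiff, Set.mem_insert_iff, Set.mem_ofPred_eq, Sym2.mem_iff]
        grind
      have hM' : G.IsMatching (M \ {s(p, t)}) :=
        (hM.subset Set.sdiff_subset).of_addLeaf hp ht (hcov' ▸ htC)
      refine ⟨_, ⟨_, hM', hcov', rfl⟩, ?_⟩
      change ((w s(p, t) + ∑ᶠ e ∈ M \ {s(p, t)}, w e : ℤ) : WithTop ℤ) = _
      rw [← hweight hM' hcov', Set.insert_sdiff_singleton, Set.insert_eq_of_mem hmem]
    · rintro ⟨_, ⟨M, hM, hcov, rfl⟩, rfl⟩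
      refine ⟨insert s(p, t) M, ?_, ?_, ?_⟩
      · exact (hM.addLeaf hp ht).insert (Or.inr rfl) (hcov ▸ hpC) (hcov ▸ htC)
      · rw [coversVerts_insert, hcov]
      · rw [hweight hM hcov, WithTop.coe_add]
  · refine (G.finite_setOf_isMatching.image fun M => ((∑ᶠ e ∈ M, w e : ℤ) : WithTop ℤ)).subset ?_
    rintro z ⟨M, hM, -, rfl⟩
    exact ⟨M, hM, rfl⟩

end AddLeaf

section Toggle

variable [DecidableEq V] {t p : V}

theorem mem_verts_map_swap (ht : t ∈ G.verts) : p ∈ (G.map (Equiv.swap t p)).verts :=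
  ⟨t, ht, Equiv.swap_apply_left t p⟩

theorem notMem_verts_map_swap (hp : p ∉ G.verts) : t ∉ (G.map (Equiv.swap t p)).verts := by
  rintro ⟨v, hv, hvt⟩
  rw [Equiv.swap_apply_eq_iff, Equiv.swap_apply_left] at hvt
  exact hp (hvt ▸ hv)

/-- The network in which the vertex `t` of `G` is renamed to a new vertex `p` and `t` is attached
to `p` as a leaf. It represents `X ↦ f (X ∆ {t})` if `G` represents `f`. -/
def toggle (G : FinGraph V) (ht : t ∈ G.verts) (hp : p ∉ G.verts) : FinGraph V :=
  (G.map (Equiv.swap t p)).addLeaf (mem_verts_map_swap ht) (notMem_verts_map_swap hp)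

/-- The edge weights of `G.toggle`: those of `G` after renaming, and `0` on the new edge. -/
def toggleWeight (w : Sym2 V → ℤ) (t p : V) : Sym2 V → ℤ :=
  Function.update (fun e => w (e.map (Equiv.swap t p))) s(p, t) 0

theorem toggleWeight_swap (hp : p ∉ G.verts) {u v : V} (huv : G.Adj u v) :
    toggleWeight w t p s(Equiv.swap t p u, Equiv.swap t p v) = w s(u, v) := by
  obtain ⟨hu, hv⟩ := G.mem_of_adj u v huv
  have hne : s(Equiv.swap t p u, Equiv.swap t p v) ≠ s(p, t) := by
    intro h
    rcases Sym2.mem_iff.1 (h ▸ Sym2.mem_mk_right p t) with ht' | ht'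
    · exact notMem_verts_map_swap hp ⟨u, hu, ht'.symm⟩
    · exact notMem_verts_map_swap hp ⟨v, hv, ht'.symm⟩
  simp [toggleWeight, hne]

variable (ht : t ∈ G.verts) (hp : p ∉ G.verts)

theorem verts_toggle : (G.toggle ht hp).verts = insert p G.verts := by
  have hmap : Equiv.swap t p '' G.verts = insert p G.verts \ {t} :=
    Equiv.image_swap_of_mem_of_notMem ht hp
  change insert t (Equiv.swap t p '' G.verts) = _
  rw [hmap, Set.insert_sdiff_singleton, Set.insert_eq_of_mem (Set.mem_insert_of_mem p ht)]

theorem minCoverWeight_toggle_insert_insert (htC : t ∉ C) (hpC : p ∉ C) :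
    (G.toggle ht hp).minCoverWeight (toggleWeight w t p) (insert p (insert t C)) =
      G.minCoverWeight w C := by
  have hfix : Set.EqOn (Equiv.swap t p) id C := fun x hx =>
    Equiv.swap_apply_of_ne_of_ne (ne_of_mem_of_not_mem hx htC) (ne_of_mem_of_not_mem hx hpC)
  have hweight : toggleWeight w t p s(p, t) = 0 := Function.update_self ..
  rw [toggle, minCoverWeight_addLeaf_insert _ _ hpC htC, hweight, WithTop.coe_zero, zero_add,
    ← minCoverWeight_map (Equiv.swap t p) fun _ _ => toggleWeight_swap hp, hfix.image_eq_self]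

theorem minCoverWeight_toggle_insert (htC : t ∉ C) (hpC : p ∉ C) :
    (G.toggle ht hp).minCoverWeight (toggleWeight w t p) (insert p C) =
      G.minCoverWeight w (insert t C) := by
  have hpt : p ≠ t := (ne_of_mem_of_not_mem ht hp).symm
  have hswap : Equiv.swap t p '' insert t C = insert p C := by
    rw [Equiv.image_swap_of_mem_of_notMem (Set.mem_insert t C) (by simp [hpt, hpC])]
    grind
  rw [toggle, minCoverWeight_addLeaf_of_notMem _ _ (by simp [hpt.symm, htC]), ← hswap,
    minCoverWeight_map (Equiv.swap t p) fun _ _ => toggleWeight_swap hp]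

theorem minMatchingWeight_toggle (htT : t ∈ T) (hT : T ⊆ G.verts) (hX : X ⊆ T) :
    minMatchingWeight (G.toggle ht hp) (toggleWeight w t p) T X =
      minMatchingWeight G w T (X ∆ {t}) := by
  let C := G.verts \ T ∪ X \ {t}
  have htC : t ∉ C := by simp [C, htT]
  have hpC : p ∉ C := fun h => hp (h.elim And.left fun h => hT (hX h.1))
  rw [minMatchingWeight_eq_minCoverWeight, minMatchingWeight_eq_minCoverWeight, verts_toggle,
    Set.symmDiff_def]
  by_cases htX : t ∈ X
  · have hcover : insert p G.verts \ T ∪ X = insert p (insert t C) := by grind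
    have hcover' : G.verts \ T ∪ (X \ {t} ∪ {t} \ X) = C := by grind
    rw [hcover, hcover', minCoverWeight_toggle_insert_insert ht hp htC hpC]
  · have hcover : insert p G.verts \ T ∪ X = insert p C := by grind
    have hcover' : G.verts \ T ∪ (X \ {t} ∪ {t} \ X) = insert t C := by grind
    rw [hcover, hcover', minCoverWeight_toggle_insert ht hp htC hpC]

end Toggle

/-- The graph on the finite vertex set `T` in which distinct `u, v ∈ T` are adjacent when
`R {u, v}` holds; it is the mimicking network of a cost function that is finite at `∅`. -/
def ofPairs (T : Set V) (hT : T.Finite) (R : Set V → Prop) : FinGraph V where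
  verts := T
  finite := hT
  Adj u v := (u ∈ T ∧ v ∈ T) ∧ u ≠ v ∧ R {u, v}
  symm u v h := ⟨h.1.symm, h.2.1.symm, Set.pair_comm u v ▸ h.2.2⟩
  irrefl _ h := h.2.1 rfl
  mem_of_adj _ _ h := h.1

end FinGraph

/-- The cost function `f` on subsets of `T` is, up to an additive constant, the minimum matching
weight of a network with at most `n` vertices. Only the values of `f` at subsets of `T`
matter. -/
def HasMimickingNetwork {V : Type} (T : Set V) (f : Set V → WithTop ℤ) (n : ℕ) : Prop :=
  ∃ (G : FinGraph V) (w : Sym2 V → ℤ) (c : ℤ), T ⊆ G.verts ∧ G.verts.ncard ≤ n ∧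
    ∀ X ⊆ T, f X = (c : WithTop ℤ) + minMatchingWeight G w T X

namespace HasMimickingNetwork

open FinGraph

variable {V : Type} {T : Set V} {f : Set V → WithTop ℤ} {n : ℕ}

theorem of_minMatchingWeight {G : FinGraph V} (w : Sym2 V → ℤ) (hT : T ⊆ G.verts)
    (hn : G.verts.ncard ≤ n) : HasMimickingNetwork T (minMatchingWeight G w T) n :=
  ⟨G, w, 0, hT, hn, fun _ _ => (zero_add _).symm⟩

theorem mono {m : ℕ} (h : HasMimickingNetwork T f m) (hmn : m ≤ n) :
    HasMimickingNetwork T f n := by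
  obtain ⟨G, w, c, hT, hm, hf⟩ := h
  exact ⟨G, w, c, hT, hm.trans hmn, hf⟩

theorem of_eq_top (hT : T.Finite) {p : V} (hp : p ∉ T) (hf : ∀ X ⊆ T, f X = ⊤) :
    HasMimickingNetwork T f (T.ncard + 1) := by
  refine ⟨ofPairs (insert p T) (hT.insert p) fun _ => False, 0, 0, Set.subset_insert p T,
    Set.ncard_insert_le p T, fun X hX => ?_⟩
  rw [hf X hX, minMatchingWeight_eq_minCoverWeight, minCoverWeight_eq_top, WithTop.add_top]
  intro M hM hcov
  have hpM : p ∈ coversVerts M := hcov ▸ Or.inl ⟨Set.mem_insert p T, hp⟩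
  obtain ⟨e, he, -⟩ := hpM
  obtain ⟨u, v, huv, -⟩ := hM.1 e he
  exact huv.2.2

theorem of_odd_eq_top (hT : T.Finite) (hcard : T.ncard ≤ 3) (h0 : f ∅ ≠ ⊤)
    (hodd : ∀ X ⊆ T, Odd X.ncard → f X = ⊤) : HasMimickingNetwork T f T.ncard := by
  obtain ⟨c, hc⟩ := WithTop.ne_top_iff_exists.1 h0
  let G : FinGraph V := ofPairs T hT fun X => f X ≠ ⊤
  let w : Sym2 V → ℤ := fun e => (f e).untopD c - c
  have hpair : ∀ {s t : V}, s ≠ t → {s, t} ⊆ T → f {s, t} = c + G.minCoverWeight w {s, t} := by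
    intro s t hst hstT
    rcases eq_or_ne (f {s, t}) ⊤ with hf | hf
    · have hnadj : ¬ G.Adj s t := fun hadj => hadj.2.2 hf
      rw [minCoverWeight_pair_of_not_adj hnadj, WithTop.add_top, hf]
    · have hadj : G.Adj s t := ⟨Set.pair_subset_iff.1 hstT, hst, hf⟩
      obtain ⟨a, ha⟩ := WithTop.ne_top_iff_exists.1 hf
      have hw : w s(s, t) = a - c := by
        simp only [w, Sym2.coe_mk, ← ha, WithTop.untopD_coe]
      rw [minCoverWeight_pair_of_adj hadj, hw, ← WithTop.coe_add, add_sub_cancel, ha]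
  refine ⟨G, w, c, subset_rfl, le_rfl, fun X hX => ?_⟩
  rw [show minMatchingWeight G w T X = _ from G.minMatchingWeight_verts w X]
  rcases Nat.even_or_odd X.ncard with hXeven | hXodd
  · have hXcard : X.ncard ≤ 3 := (Set.ncard_le_ncard hX hT).trans hcard
    have hXcard' : X.ncard = 0 ∨ X.ncard = 2 := by grind
    rcases hXcard' with hX0 | hX2
    · rw [(Set.ncard_eq_zero (hT.subset hX)).1 hX0, minCoverWeight_empty, add_zero, hc]
    · obtain ⟨s, t, hst, rfl⟩ := Set.ncard_eq_two.1 hX2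
      exact hpair hst hX
  · rw [hodd X hX hXodd, minCoverWeight_eq_top_of_odd hXodd, WithTop.add_top]

theorem symmDiff_singleton (h : HasMimickingNetwork T f n) (hn : n < (Set.univ : Set V).encard)
    {t : V} (ht : t ∈ T) : HasMimickingNetwork T (fun X => f (X ∆ {t})) (n + 1) := by
  obtain ⟨G, w, c, hT, hG, hf⟩ := h
  obtain ⟨p, hp⟩ : ∃ p, p ∉ G.verts := by
    by_contra! hall
    rw [← Set.eq_univ_of_forall hall, ← G.finite.cast_ncard_eq, Nat.cast_lt] at hn
    omega
  classical
  refine ⟨G.toggle (hT ht) hp, toggleWeight w t p, c, ?_, ?_, fun X hX => ?_⟩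
  · rw [verts_toggle]
    exact hT.trans (Set.subset_insert p _)
  · rw [verts_toggle]
    exact (Set.ncard_insert_le p _).trans (Nat.succ_le_succ hG)
  · rw [minMatchingWeight_toggle _ hp ht hT hX]
    exact hf _ (symmDiff_le_sup.trans (Set.union_subset hX (Set.singleton_subset_iff.2 ht)))

theorem symmDiff_set (h : HasMimickingNetwork T f n) {B : Set V} (hBfin : B.Finite) (hB : B ⊆ T)
    (hn : (n + B.ncard : ℕ) ≤ (Set.univ : Set V).encard) :
    HasMimickingNetwork T (fun X => f (X ∆ B)) (n + B.ncard) := by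
  induction B, hBfin using Set.Finite.induction_on with
  | empty =>
    have hsymm : ∀ X : Set V, X ∆ ∅ = X := symmDiff_bot
    simpa only [hsymm, Set.ncard_empty, add_zero] using h
  | @insert t B htB hBfin ih =>
    obtain ⟨ht, hB⟩ := Set.insert_subset_iff.1 hB
    rw [Set.ncard_insert_of_notMem htB hBfin, ← add_assoc] at hn ⊢
    have hsymm : ∀ X, X ∆ insert t B = X ∆ {t} ∆ B := by
      intro X
      rw [symmDiff_assoc, (Set.disjoint_singleton_left.2 htB).symmDiff_eq_sup, Set.insert_eq]
      rfl
    simp only [hsymm]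
    have hlt : ((n + B.ncard : ℕ) : ℕ∞) < (Set.univ : Set V).encard :=
      (Nat.cast_lt.2 (Nat.lt_succ_self _)).trans_le hn
    exact (ih hB hlt.le).symmDiff_singleton hlt ht

theorem of_minMatchingWeight_ne_top {G : FinGraph V} {w : Sym2 V → ℤ} (hT : T ⊆ G.verts)
    (hcard : T.ncard ≤ 3) {B : Set V} (hB : B ⊆ T) (hfB : minMatchingWeight G w T B ≠ ⊤)
    (hn : (T.ncard + B.ncard : ℕ) ≤ (Set.univ : Set V).encard) :
    HasMimickingNetwork T (minMatchingWeight G w T) (T.ncard + B.ncard) := by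
  have hTfin : T.Finite := G.finite.subset hT
  have hodd : ∀ X ⊆ T, Odd X.ncard → minMatchingWeight G w T (X ∆ B) = ⊤ := by
    intro X hX hXodd
    by_contra hne
    have heven := even_ncard_symmDiff_of_minMatchingWeight_ne_top hT
      (symmDiff_le_sup.trans (Set.union_subset hX hB)) hB hne hfB
    rw [symmDiff_symmDiff_cancel_right] at heven
    exact Nat.not_even_iff_odd.2 hXodd heven
  have hshift : HasMimickingNetwork T (fun X => minMatchingWeight G w T (X ∆ B)) T.ncard :=
    of_odd_eq_top hTfin hcard (by rwa [← Set.bot_eq_empty, bot_symmDiff]) hodd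
  simpa only [symmDiff_symmDiff_cancel_right] using
    hshift.symmDiff_set (hTfin.subset hB) hB hn

end HasMimickingNetwork

/-- Weighted matching-mimicking networks for at most three terminals: there is an `N` such
that every integer-edge-weighted finite simple graph `G` with a terminal set `T` of at most
three vertices has a weighted mimicking network `G'` with at most `N` vertices — for some
constant `c ∈ ℤ`, for every `X ⊆ T`, the minimum weight of a matching of `G` covering
exactly `(V(G) \ T) ∪ X` equals `c` plus the corresponding minimum weight in `G'`
(in `ℤ ∪ {+∞}`, with `c + ∞ = ∞`). -/
theorem weighted_matching_mimicking_network_exists :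
    ∃ N : ℕ, ∀ (V : Type) (G : FinGraph V) (w : Sym2 V → ℤ) (T : Set V),
      T ⊆ G.verts → T.ncard ≤ 3 →
      ∃ (G' : FinGraph V) (w' : Sym2 V → ℤ) (c : ℤ),
        T ⊆ G'.verts ∧ G'.verts.ncard ≤ N ∧
        ∀ X ⊆ T, minMatchingWeight G w T X =
          (c : WithTop ℤ) + minMatchingWeight G' w' T X := by
  refine ⟨6, fun V G w T hT hcard => ?_⟩
  change HasMimickingNetwork T (minMatchingWeight G w T) 6
  have hTfin : T.Finite := G.finite.subset hT
  rcases le_or_gt G.verts.ncard 6 with hsmall | hlarge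
  · exact .of_minMatchingWeight w hT hsmall
  have huniv : ((6 : ℕ) : ℕ∞) ≤ (Set.univ : Set V).encard := calc
    ((6 : ℕ) : ℕ∞) ≤ G.verts.ncard := Nat.cast_le.2 hlarge.le
    _ = G.verts.encard := G.finite.cast_ncard_eq
    _ ≤ (Set.univ : Set V).encard := Set.encard_le_encard (Set.subset_univ _)
  by_cases hfeas : ∃ B ⊆ T, minMatchingWeight G w T B ≠ ⊤
  · obtain ⟨B, hB, hfB⟩ := hfeas
    have hn : T.ncard + B.ncard ≤ 6 := by linarith [Set.ncard_le_ncard hB hTfin]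
    exact (HasMimickingNetwork.of_minMatchingWeight_ne_top hT hcard hB hfB
      ((Nat.cast_le.2 hn).trans huniv)).mono hn
  · push Not at hfeas
    obtain ⟨p, -, hpT⟩ := Set.exists_mem_notMem_of_ncard_lt_ncard (s := T) (t := G.verts)
      (by omega) hTfin
    exact (HasMimickingNetwork.of_eq_top hTfin hpT hfeas).mono (by omega)
end
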